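/- Fix a, b ∈ ℝ and ρ₀ ∈ (−1,1). The function ρ ↦ p₁₂(a,b,ρ) is differentiable at ρ₀ and its derivative there equals f(a,b|ρ₀) (Price's theorem for the bivariate Gaussian orthant probability). -/

import Mathlib

open MeasureTheory

/-- The Gaussian tail function `Q(a) = ∫_a^∞ φ(t) dt`, where `φ` is the standard
normal density. -/
noncomputable def Qtail (a : ℝ) : ℝ :=
  ∫ t in Set.Ioi a, (1 / Real.sqrt (2 * Real.pi)) * Real.exp (-t ^ 2 / 2)

/-- The standardized bivariate Gaussian density `f(y₁,y₂|ρ)` with correlation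
coefficient `ρ`. -/
noncomputable def biGauss (y₁ y₂ ρ : ℝ) : ℝ :=
  (1 / (2 * Real.pi * Real.sqrt (1 - ρ ^ 2))) *
    Real.exp (-(y₁ ^ 2 - 2 * ρ * y₁ * y₂ + y₂ ^ 2) / (2 * (1 - ρ ^ 2)))

/-- The orthant probability `p₁₂(a,b,ρ) = ∫_a^∞ ∫_b^∞ f(y₁,y₂|ρ) dy₂ dy₁`. -/
noncomputable def orthantProb (a b ρ : ℝ) : ℝ :=
  ∫ y₁ in Set.Ioi a, ∫ y₂ in Set.Ioi b, biGauss y₁ y₂ ρ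

/-- The function `g(κ₁,κ₂,ϱ)` from the paper. -/
noncomputable def gFun (κ₁ κ₂ ϱ : ℝ) : ℝ :=
  (κ₁ / Real.sqrt (2 * Real.pi)) * Real.exp (-κ₁ ^ 2 / 2) *
      Qtail ((κ₂ - ϱ * κ₁) / Real.sqrt (1 - ϱ ^ 2))
    - ϱ * biGauss κ₁ κ₂ ϱ

/-! Write `φ` for the standard normal density and `z = (b - ρ x) / √(1 - ρ²)`. Since
`f(x,y|ρ) = φ(x) φ((y - ρ x) / √(1 - ρ²)) / √(1 - ρ²)`, the inner integral of the orthant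
probability is `φ(x) Q(z)`. Its derivative in `ρ` is `-∂ₓ f(x,b|ρ)`: this is the equation
`∂_ρ f = ∂ₓ ∂_y f` integrated over `y > b`. On `|ρ| ≤ r < 1` this derivative is dominated by a
multiple of `(|x| + |b|) φ(x)`, so the outer integral may be differentiated under the integral
sign, and integrating `-∂ₓ f(x,b|ρ)` over `x > a` leaves `f(a,b|ρ)`. -/

section

open Filter ProbabilityTheory Real Set Topology

open scoped NNReal

section TailIntegrals

variable {E : Type*} [NormedAddCommGroup E] [NormedSpace ℝ E]

lemma hasDerivAt_integral_Ioi [CompleteSpace E] {f : ℝ → E} {x : ℝ} (hf : Integrable f)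
    (hx : ContinuousAt f x) : HasDerivAt (fun u => ∫ t in Ioi u, f t) (-f x) x := by
  have h_split : (fun u => ∫ t in Ioi u, f t) =
      fun u => (∫ t in Ioi x, f t) - ∫ t in x..u, f t := by
    funext u
    rw [← intervalIntegral.integral_Ioi_sub_Ioi' hf.integrableOn hf.integrableOn, sub_sub_cancel]
  rw [h_split]
  exact (intervalIntegral.integral_hasDerivAt_right hf.intervalIntegrable
    hf.aestronglyMeasurable.stronglyMeasurableAtFilter hx).const_sub _

lemma integral_comp_sub_right_Ioi (f : ℝ → E) (b c : ℝ) :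
    ∫ y in Ioi b, f (y - c) = ∫ t in Ioi (b - c), f t := by
  simpa using (measurePreserving_sub_right volume c).setIntegral_preimage_emb
    (MeasurableEquiv.subRight c).measurableEmbedding f (Ioi (b - c))

lemma integral_comp_sub_div_Ioi (f : ℝ → E) (b c : ℝ) {s : ℝ} (hs : 0 < s) :
    ∫ y in Ioi b, f ((y - c) / s) = s • ∫ t in Ioi ((b - c) / s), f t := by
  rw [integral_comp_sub_right_Ioi (fun y => f (y / s))]
  simpa only [div_eq_inv_mul, inv_inv] using integral_comp_mul_left_Ioi f (b - c) (inv_pos.2 hs)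

end TailIntegrals

lemma continuous_gaussianPDFReal (μ : ℝ) (v : ℝ≥0) : Continuous (gaussianPDFReal μ v) := by
  unfold gaussianPDFReal
  fun_prop

lemma integrable_mul_gaussianPDFReal (μ : ℝ) (v : ℝ≥0) :
    Integrable (fun x => x * gaussianPDFReal μ v x) := by
  rcases eq_or_ne v 0 with rfl | hv
  · simp
  have h_id : Integrable id (gaussianReal μ v) := (memLp_id_gaussianReal 1).integrable le_rfl
  rw [gaussianReal_of_var_ne_zero μ hv, integrable_withDensity_iff_integrable_smul'
    (measurable_gaussianPDF μ v) (ae_of_all _ fun _ => gaussianPDF_lt_top)] at h_id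
  simpa only [toReal_gaussianPDF, smul_eq_mul, id, mul_comm] using h_id

local notation "φ" => gaussianPDFReal 0 1

lemma gaussianPDFReal_zero_one_apply (x : ℝ) : φ x = 1 / √(2 * π) * exp (-x ^ 2 / 2) := by
  simp [gaussianPDFReal]

lemma gaussianPDFReal_zero_one_le_one (x : ℝ) : φ x ≤ 1 := by
  have h_sqrt : 1 ≤ √(2 * π) := one_le_sqrt.2 (by linarith [pi_gt_three])
  have h_exp : exp (-x ^ 2 / 2) ≤ 1 := exp_le_one_iff.2 (by linarith [sq_nonneg x])
  rw [gaussianPDFReal_zero_one_apply]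
  exact mul_le_one₀ (div_le_one_of_le₀ h_sqrt (sqrt_nonneg _)) (exp_nonneg _) h_exp

lemma Qtail_eq_integral_gaussianPDFReal (x : ℝ) : Qtail x = ∫ t in Ioi x, φ t := by
  simp only [Qtail, gaussianPDFReal_zero_one_apply]

lemma Qtail_nonneg (x : ℝ) : 0 ≤ Qtail x := by
  rw [Qtail_eq_integral_gaussianPDFReal]
  exact setIntegral_nonneg measurableSet_Ioi fun t _ => gaussianPDFReal_nonneg 0 1 t

lemma Qtail_le_one (x : ℝ) : Qtail x ≤ 1 := by
  rw [Qtail_eq_integral_gaussianPDFReal, ← integral_gaussianPDFReal_eq_one 0 one_ne_zero]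
  exact setIntegral_le_integral (integrable_gaussianPDFReal 0 1)
    (ae_of_all _ (gaussianPDFReal_nonneg 0 1))

lemma hasDerivAt_Qtail (x : ℝ) : HasDerivAt Qtail (-φ x) x := by
  rw [funext Qtail_eq_integral_gaussianPDFReal]
  exact hasDerivAt_integral_Ioi (integrable_gaussianPDFReal 0 1)
    (continuous_gaussianPDFReal 0 1).continuousAt

lemma continuous_Qtail : Continuous Qtail :=
  continuous_iff_continuousAt.2 fun x => (hasDerivAt_Qtail x).continuousAt

lemma one_sub_sq_pos_of_mem_Ioo {ρ : ℝ} (hρ : ρ ∈ Ioo (-1) 1) : 0 < 1 - ρ ^ 2 := by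
  nlinarith [hρ.1, hρ.2]

lemma biGauss_nonneg (x y ρ : ℝ) : 0 ≤ biGauss x y ρ := by
  unfold biGauss
  positivity

lemma continuous_biGauss_fst (y ρ : ℝ) : Continuous (fun x => biGauss x y ρ) := by
  unfold biGauss
  fun_prop

/-- The function `-∂ₓ f(x,y|ρ)`, defined by its closed form. At `y = b` it is also the
`ρ`-derivative of the inner integral of the orthant probability. -/
noncomputable def negDerivBiGauss (x y ρ : ℝ) : ℝ :=
  (x - ρ * y) / (1 - ρ ^ 2) * biGauss x y ρ

lemma continuous_negDerivBiGauss_fst (y ρ : ℝ) : Continuous (fun x => negDerivBiGauss x y ρ) :=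
  ((continuous_id.sub continuous_const).div_const _).mul (continuous_biGauss_fst y ρ)

lemma hasDerivAt_biGauss_fst (x y ρ : ℝ) :
    HasDerivAt (fun x => biGauss x y ρ) (-negDerivBiGauss x y ρ) x := by
  have h_exponent : HasDerivAt
      (fun x => -(x ^ 2 - 2 * ρ * x * y + y ^ 2) / (2 * (1 - ρ ^ 2)))
      (-((x - ρ * y) / (1 - ρ ^ 2))) x := by
    have h_linear : HasDerivAt (fun x => 2 * ρ * x * y) (2 * ρ * y) x := by
      simpa using ((hasDerivAt_id x).const_mul (2 * ρ)).mul_const y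
    refine ((((hasDerivAt_pow 2 x).sub h_linear).add_const (y ^ 2)).neg.div_const
      (2 * (1 - ρ ^ 2))).congr_deriv ?_
    rw [div_mul_eq_div_div]
    push_cast
    ring
  refine (h_exponent.exp.const_mul (1 / (2 * π * √(1 - ρ ^ 2)))).congr_deriv ?_
  rw [negDerivBiGauss, biGauss]
  ring

lemma biGauss_eq_mul_gaussianPDFReal {ρ : ℝ} (hρ : ρ ∈ Ioo (-1) 1) (x y : ℝ) :
    biGauss x y ρ = φ x * φ ((y - ρ * x) / √(1 - ρ ^ 2)) / √(1 - ρ ^ 2) := by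
  have h_var := one_sub_sq_pos_of_mem_Ioo hρ
  have h_exponent : -(x ^ 2 - 2 * ρ * x * y + y ^ 2) / (2 * (1 - ρ ^ 2)) =
      -x ^ 2 / 2 + -((y - ρ * x) / √(1 - ρ ^ 2)) ^ 2 / 2 := by
    rw [div_pow, sq_sqrt h_var.le]
    field_simp
    ring
  have h_norm : 1 / (2 * π) = (1 / √(2 * π)) ^ 2 := by
    rw [div_pow, one_pow, sq_sqrt two_pi_pos.le]
  rw [biGauss, gaussianPDFReal_zero_one_apply, gaussianPDFReal_zero_one_apply, h_exponent,
    exp_add, ← one_div_mul_one_div (2 * π), h_norm]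
  ring

lemma biGauss_le_gaussianPDFReal_div {ρ : ℝ} (hρ : ρ ∈ Ioo (-1) 1) (x y : ℝ) :
    biGauss x y ρ ≤ φ x / √(1 - ρ ^ 2) := by
  rw [biGauss_eq_mul_gaussianPDFReal hρ]
  gcongr
  exact mul_le_of_le_one_right (gaussianPDFReal_nonneg 0 1 x) (gaussianPDFReal_zero_one_le_one _)

lemma integrable_biGauss_fst {ρ : ℝ} (hρ : ρ ∈ Ioo (-1) 1) (y : ℝ) :
    Integrable (fun x => biGauss x y ρ) := by
  refine ((integrable_gaussianPDFReal 0 1).div_const √(1 - ρ ^ 2)).mono'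
    (continuous_biGauss_fst y ρ).aestronglyMeasurable (ae_of_all _ fun x => ?_)
  rw [norm_of_nonneg (biGauss_nonneg x y ρ)]
  exact biGauss_le_gaussianPDFReal_div hρ x y

lemma integral_Ioi_biGauss {ρ : ℝ} (hρ : ρ ∈ Ioo (-1) 1) (b x : ℝ) :
    ∫ y in Ioi b, biGauss x y ρ = φ x * Qtail ((b - ρ * x) / √(1 - ρ ^ 2)) := by
  have h_std : 0 < √(1 - ρ ^ 2) := sqrt_pos.2 (one_sub_sq_pos_of_mem_Ioo hρ)
  simp_rw [biGauss_eq_mul_gaussianPDFReal hρ]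
  rw [integral_div, integral_const_mul, integral_comp_sub_div_Ioi _ _ _ h_std,
    ← Qtail_eq_integral_gaussianPDFReal, smul_eq_mul]
  field_simp

lemma integrable_integral_Ioi_biGauss {ρ : ℝ} (hρ : ρ ∈ Ioo (-1) 1) (b : ℝ) :
    Integrable (fun x => ∫ y in Ioi b, biGauss x y ρ) := by
  simp_rw [integral_Ioi_biGauss hρ]
  have h_cont : Continuous fun x => Qtail ((b - ρ * x) / √(1 - ρ ^ 2)) :=
    continuous_Qtail.comp (by fun_prop)
  refine (integrable_gaussianPDFReal 0 1).mul_bdd (c := 1) h_cont.aestronglyMeasurable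
    (ae_of_all _ fun x => ?_)
  rw [norm_of_nonneg (Qtail_nonneg _)]
  exact Qtail_le_one _

lemma hasDerivAt_sub_mul_div_sqrt_one_sub_sq {ρ : ℝ} (hρ : ρ ∈ Ioo (-1) 1) (b x : ℝ) :
    HasDerivAt (fun ρ => (b - ρ * x) / √(1 - ρ ^ 2))
      (-((x - ρ * b) / (1 - ρ ^ 2) / √(1 - ρ ^ 2))) ρ := by
  have h_var := one_sub_sq_pos_of_mem_Ioo hρ
  have h_std : 0 < √(1 - ρ ^ 2) := sqrt_pos.2 h_var
  have h_num : HasDerivAt (fun ρ => b - ρ * x) (-x) ρ := by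
    simpa using ((hasDerivAt_id ρ).mul_const x).const_sub b
  have h_den : HasDerivAt (fun ρ => √(1 - ρ ^ 2)) (-ρ / √(1 - ρ ^ 2)) ρ := by
    refine (((hasDerivAt_pow 2 ρ).const_sub 1).sqrt h_var.ne').congr_deriv ?_
    field_simp
    ring
  refine (h_num.div h_den h_std.ne').congr_deriv ?_
  have h_sq : √(1 - ρ ^ 2) ^ 2 = 1 - ρ ^ 2 := sq_sqrt h_var.le
  field_simp
  rw [h_sq]
  ring

lemma hasDerivAt_integral_Ioi_biGauss {ρ : ℝ} (hρ : ρ ∈ Ioo (-1) 1) (b x : ℝ) :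
    HasDerivAt (fun ρ => ∫ y in Ioi b, biGauss x y ρ) (negDerivBiGauss x b ρ) ρ := by
  have h_closed : (fun ρ => ∫ y in Ioi b, biGauss x y ρ) =ᶠ[𝓝 ρ]
      fun ρ => φ x * Qtail ((b - ρ * x) / √(1 - ρ ^ 2)) := by
    filter_upwards [isOpen_Ioo.mem_nhds hρ] with r hr using integral_Ioi_biGauss hr b x
  refine HasDerivAt.congr_of_eventuallyEq ?_ h_closed
  refine (((hasDerivAt_Qtail _).comp ρ
    (hasDerivAt_sub_mul_div_sqrt_one_sub_sq hρ b x)).const_mul (φ x)).congr_deriv ?_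
  rw [negDerivBiGauss, biGauss_eq_mul_gaussianPDFReal hρ]
  ring

lemma norm_negDerivBiGauss_le {ρ r : ℝ} (hρ : |ρ| ≤ r) (hr : r < 1) (b x : ℝ) :
    ‖negDerivBiGauss x b ρ‖ ≤ ((1 - r ^ 2) * √(1 - r ^ 2))⁻¹ * (‖x * φ x‖ + |b| * φ x) := by
  have hρ_mem : ρ ∈ Ioo (-1) 1 := abs_lt.1 (hρ.trans_lt hr)
  have h_var_r : 0 < 1 - r ^ 2 :=
    one_sub_sq_pos_of_mem_Ioo ⟨by linarith [abs_nonneg ρ], hr⟩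
  have h_var_le : 1 - r ^ 2 ≤ 1 - ρ ^ 2 :=
    sub_le_sub_left (sq_le_sq' (abs_le.1 hρ).1 (abs_le.1 hρ).2) 1
  have h_num : |x - ρ * b| ≤ |x| + |b| := by
    calc |x - ρ * b| ≤ |x| + |ρ| * |b| := (abs_sub _ _).trans_eq (by rw [abs_mul])
      _ ≤ |x| + |b| := by gcongr; exact mul_le_of_le_one_left (abs_nonneg b) (hρ.trans hr.le)
  have hφ := gaussianPDFReal_nonneg 0 1 x
  calc ‖negDerivBiGauss x b ρ‖ = |x - ρ * b| / (1 - ρ ^ 2) * biGauss x b ρ := by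
        rw [negDerivBiGauss, norm_mul, norm_div, norm_of_nonneg (h_var_r.le.trans h_var_le),
          norm_of_nonneg (biGauss_nonneg x b ρ), norm_eq_abs]
    _ ≤ (|x| + |b|) / (1 - r ^ 2) * (φ x / √(1 - r ^ 2)) := by
        gcongr
        · exact biGauss_nonneg x b ρ
        · exact (biGauss_le_gaussianPDFReal_div hρ_mem x b).trans (by gcongr)
    _ = ((1 - r ^ 2) * √(1 - r ^ 2))⁻¹ * (‖x * φ x‖ + |b| * φ x) := by
        rw [norm_mul, norm_of_nonneg hφ, norm_eq_abs]
        field_simp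

lemma integrable_norm_mul_add_mul_gaussianPDFReal (μ : ℝ) (v : ℝ≥0) (C c : ℝ) :
    Integrable (fun x => C * (‖x * gaussianPDFReal μ v x‖ + c * gaussianPDFReal μ v x)) :=
  ((integrable_mul_gaussianPDFReal μ v).norm.add
    ((integrable_gaussianPDFReal μ v).const_mul c)).const_mul C

lemma integrable_negDerivBiGauss_fst {ρ : ℝ} (hρ : ρ ∈ Ioo (-1) 1) (b : ℝ) :
    Integrable (fun x => negDerivBiGauss x b ρ) :=
  (integrable_norm_mul_add_mul_gaussianPDFReal 0 1 _ |b|).mono'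
    (continuous_negDerivBiGauss_fst b ρ).aestronglyMeasurable
    (ae_of_all _ (norm_negDerivBiGauss_le le_rfl (abs_lt.2 hρ) b))

lemma integral_Ioi_negDerivBiGauss {ρ : ℝ} (hρ : ρ ∈ Ioo (-1) 1) (a b : ℝ) :
    ∫ x in Ioi a, negDerivBiGauss x b ρ = biGauss a b ρ := by
  have h_deriv : ∀ x ∈ Ici a, HasDerivAt (fun x => -biGauss x b ρ) (negDerivBiGauss x b ρ) x :=
    fun x _ => (hasDerivAt_biGauss_fst x b ρ).neg.congr_deriv (neg_neg _)
  have h_int := (integrable_negDerivBiGauss_fst hρ b).integrableOn (s := Ioi a)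
  have h_lim : Tendsto (fun x => -biGauss x b ρ) atTop (𝓝 0) :=
    tendsto_zero_of_hasDerivAt_of_integrableOn_Ioi (fun x hx => h_deriv x (Ioi_subset_Ici_self hx))
      h_int (integrable_biGauss_fst hρ b).neg.integrableOn
  rw [integral_Ioi_of_hasDerivAt_of_tendsto' h_deriv h_int h_lim, zero_sub, neg_neg]

lemma hasDerivAt_setIntegral_integral_Ioi_biGauss {ρ₀ : ℝ} (hρ₀ : ρ₀ ∈ Ioo (-1) 1) (s : Set ℝ)
    (b : ℝ) :
    HasDerivAt (fun ρ => ∫ x in s, ∫ y in Ioi b, biGauss x y ρ)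
      (∫ x in s, negDerivBiGauss x b ρ₀) ρ₀ := by
  obtain ⟨r, hρ₀r, hr⟩ := exists_between (abs_lt.2 hρ₀)
  have h_nhds : {ρ : ℝ | |ρ| < r} ∈ 𝓝 ρ₀ :=
    (isOpen_lt continuous_abs continuous_const).mem_nhds hρ₀r
  have h_mem : ∀ ρ ∈ {ρ : ℝ | |ρ| < r}, ρ ∈ Ioo (-1) 1 := fun ρ hρ => abs_lt.1 (hρ.trans hr)
  refine (hasDerivAt_integral_of_dominated_loc_of_deriv_le
    (F := fun ρ x => ∫ y in Ioi b, biGauss x y ρ) h_nhds ?_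
    (integrable_integral_Ioi_biGauss hρ₀ b).integrableOn
    (integrable_negDerivBiGauss_fst hρ₀ b).aestronglyMeasurable.restrict
    (ae_of_all _ fun x ρ hρ => norm_negDerivBiGauss_le (le_of_lt hρ) hr b x)
    (integrable_norm_mul_add_mul_gaussianPDFReal 0 1 _ |b|).integrableOn
    (ae_of_all _ fun x ρ hρ => hasDerivAt_integral_Ioi_biGauss (h_mem ρ hρ) b x)).2
  filter_upwards [h_nhds] with ρ hρ
  exact (integrable_integral_Ioi_biGauss (h_mem ρ hρ) b).aestronglyMeasurable.restrict

end

/-- Price's theorem: Fix `a, b ∈ ℝ` and `ρ₀ ∈ (−1,1)`. The function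
`ρ ↦ p₁₂(a,b,ρ)` is differentiable at `ρ₀` and its derivative there equals
`f(a,b|ρ₀)`. -/
theorem price_theorem (a b ρ₀ : ℝ) (hρ₀ : ρ₀ ∈ Set.Ioo (-1 : ℝ) 1) :
    HasDerivAt (fun ρ => orthantProb a b ρ) (biGauss a b ρ₀) ρ₀ := by
  rw [← integral_Ioi_negDerivBiGauss hρ₀ a b]
  exact hasDerivAt_setIntegral_integral_Ioi_biGauss hρ₀ (Set.Ioi a) b
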